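/- Let β > 0 and let m ≥ 1 be an integer. There exists K > 0 depending only on m and β such that for all integers n ≥ 1, |E[Σ_{1≤a<b<c≤n} m(a,c)·m(b,c)] − (m(m−1)/2)·n| ≤ K · n^{1/(2+β)}. -/

import Mathlib

open Finset

/-- A parent sequence of length `N`: for each `t ∈ {2,…,N}` an index `f t ∈ {1,…,t-1}`. -/
def ParentSeq (N : ℕ) : Type :=
  ∀ t : Set.Icc 2 N, Set.Icc 1 ((t : ℕ) - 1)

noncomputable instance (N : ℕ) : Fintype (ParentSeq N) := by
  unfold ParentSeq
  classical
  infer_instance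

/-- The value of a parent sequence at `j` (junk value `0` outside `{2,…,N}`). -/
def pval {N : ℕ} (f : ParentSeq N) (j : ℕ) : ℕ :=
  if h : 2 ≤ j ∧ j ≤ N then (f ⟨j, Set.mem_Icc.mpr h⟩ : ℕ) else 0

/-- The degree `d_t(v_i)` of vertex `i` at time `t` in the tree determined by `f`. -/
def deg {N : ℕ} (f : ParentSeq N) (t i : ℕ) : ℕ :=
  ((Finset.Icc 2 t).filter (fun j => pval f j = i)).card + (if 2 ≤ i then 1 else 0)

/-- The Móri probability of the parent sequence `f`. -/
noncomputable def moriP {N : ℕ} (β : ℝ) (f : ParentSeq N) : ℝ :=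
  ∏ t ∈ Finset.Icc 2 N, ((deg f (t - 1) (pval f t) : ℝ) + β) / ((2 + β) * ((t : ℝ) - 1) - 2)

/-- Expectation of `X` under the Móri measure on parent sequences of length `N`. -/
noncomputable def moriE (N : ℕ) (β : ℝ) (X : ParentSeq N → ℝ) : ℝ :=
  ∑ f : ParentSeq N, moriP β f * X f

open Classical in
/-- Probability of an event under the Móri measure on parent sequences of length `N`. -/
noncomputable def moriPr (N : ℕ) (β : ℝ) (p : ParentSeq N → Prop) : ℝ :=
  ∑ f : ParentSeq N, if p f then moriP β f else 0

/-- The index of the merged vertex containing tree vertex `t` when merging in blocks of `m`. -/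
def blk (m t : ℕ) : ℕ := (t - 1) / m + 1

/-- The number `m(a,b)` of edges joining `u_a` and `u_b` in the Móri graph `G^n_{m,β}`. -/
def mult (n m : ℕ) (f : ParentSeq (n * m)) (a b : ℕ) : ℕ :=
  ((Finset.Icc 2 (n * m)).filter (fun t =>
    (blk m t = a ∧ blk m (pval f t) = b) ∨ (blk m t = b ∧ blk m (pval f t) = a))).card

/-- The degree `d(u_i)` of the merged vertex `u_i` in the Móri graph `G^n_{m,β}`
(a loop contributes `2`). -/
def degU (n m : ℕ) (f : ParentSeq (n * m)) (i : ℕ) : ℕ :=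
  ((Finset.Icc 2 (n * m)).filter (fun t => blk m t = i)).card +
  ((Finset.Icc 2 (n * m)).filter (fun t => blk m (pval f t) = i)).card

noncomputable def WW (β : ℝ) (t : ℕ) : ℝ := (2 + β) * (t : ℝ) - 2

def dg (g : ℕ → ℕ) (t i : ℕ) : ℕ :=
  ((Finset.Icc 2 t).filter (fun j => g j = i)).card + (if 2 ≤ i then 1 else 0)

def Valid (N : ℕ) (g : ℕ → ℕ) : Prop := ∀ j, 2 ≤ j → j ≤ N → 1 ≤ g j ∧ g j < j

noncomputable def EE (N : ℕ) (β : ℝ) (X : (ℕ → ℕ) → ℝ) : ℝ :=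
  moriE N β (fun f => X (pval f))

theorem pval_valid {N : ℕ} (f : ParentSeq N) : Valid N (pval f) := by
  intro j h1 h2
  have := (f ⟨j, Set.mem_Icc.mpr ⟨h1, h2⟩⟩).2
  rw [Set.mem_Icc] at this
  simp only [pval, h1, h2, and_self, dite_true]
  constructor
  · exact this.1
  · have := this.2
    simp only at this
    omega

theorem pval_inj {N : ℕ} {f f' : ParentSeq N} (h : pval f = pval f') : f = f' := by
  funext t
  have h1 := congrFun h t.1
  have ht := t.2
  rw [Set.mem_Icc] at ht
  simp only [pval, ht, and_self, dite_true] at h1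
  exact Subtype.ext h1

theorem WW_pos {β : ℝ} (hβ : 0 < β) {t : ℕ} (ht : 1 ≤ t) : β * t ≤ WW β t := by
  have : (1 : ℝ) ≤ t := by exact_mod_cast ht
  unfold WW
  nlinarith

theorem WW_pos' {β : ℝ} (hβ : 0 < β) {t : ℕ} (ht : 1 ≤ t) : 0 < WW β t := by
  have : (1 : ℝ) ≤ t := by exact_mod_cast ht
  have := WW_pos hβ ht
  nlinarith

theorem moriP_nonneg {N : ℕ} {β : ℝ} (hβ : 0 < β) (f : ParentSeq N) : 0 ≤ moriP β f := by
  unfold moriP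
  apply Finset.prod_nonneg
  intro t ht
  rw [Finset.mem_Icc] at ht
  have h2 : (2 : ℝ) ≤ t := by exact_mod_cast ht.1
  apply div_nonneg
  · positivity
  · nlinarith

theorem EE_mono {N : ℕ} {β : ℝ} (hβ : 0 < β) {X Y : (ℕ → ℕ) → ℝ}
    (h : ∀ g, Valid N g → X g ≤ Y g) : EE N β X ≤ EE N β Y := by
  unfold EE moriE
  apply Finset.sum_le_sum
  intro f _
  exact mul_le_mul_of_nonneg_left (h _ (pval_valid f)) (moriP_nonneg hβ f)

theorem EE_congr {N : ℕ} {β : ℝ} {X Y : (ℕ → ℕ) → ℝ}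
    (h : ∀ g, Valid N g → X g = Y g) : EE N β X = EE N β Y := by
  unfold EE moriE
  apply Finset.sum_congr rfl
  intro f _
  simp only [h _ (pval_valid f)]

theorem EE_add {N : ℕ} {β : ℝ} (X Y : (ℕ → ℕ) → ℝ) :
    EE N β (fun g => X g + Y g) = EE N β X + EE N β Y := by
  simp only [EE, moriE, mul_add, Finset.sum_add_distrib]

theorem EE_mul {N : ℕ} {β : ℝ} (c : ℝ) (X : (ℕ → ℕ) → ℝ) :
    EE N β (fun g => c * X g) = c * EE N β X := by
  simp only [EE, moriE, Finset.mul_sum]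
  apply Finset.sum_congr rfl
  intros; ring

theorem EE_sum {N : ℕ} {β : ℝ} {ι : Type*} (s : Finset ι) (X : ι → (ℕ → ℕ) → ℝ) :
    EE N β (fun g => ∑ i ∈ s, X i g) = ∑ i ∈ s, EE N β (X i) := by
  simp only [EE, moriE, Finset.mul_sum]
  rw [Finset.sum_comm]

def extF {N : ℕ} (f : ParentSeq N) (k : Set.Icc 1 N) : ParentSeq (N + 1) := fun t =>
  if h : (t : ℕ) ≤ N then f ⟨t, Set.mem_Icc.mpr ⟨(Set.mem_Icc.mp t.2).1, h⟩⟩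
  else ⟨k, by
    have h1 := Set.mem_Icc.mp t.2
    have h2 := Set.mem_Icc.mp k.2
    rw [Set.mem_Icc]; omega⟩

theorem pval_extF {N : ℕ} (hN : 1 ≤ N) (f : ParentSeq N) (k : Set.Icc 1 N) :
    pval (extF f k) = Function.update (pval f) (N + 1) k := by
  funext j
  by_cases hj : j = N + 1
  · subst hj
    have : 2 ≤ N + 1 := by omega
    simp [pval, extF, this]
  · rw [Function.update_of_ne hj]
    by_cases h : 2 ≤ j ∧ j ≤ N
    · have h' : 2 ≤ j ∧ j ≤ N + 1 := by omega
      simp only [pval, dif_pos h, dif_pos h', extF, dif_pos h.2]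
    · have h' : ¬ (2 ≤ j ∧ j ≤ N + 1) := by omega
      simp only [pval, dif_neg h, dif_neg h']

def restF {N : ℕ} (f : ParentSeq (N + 1)) : ParentSeq N := fun t =>
  f ⟨t, Set.mem_Icc.mpr ⟨(Set.mem_Icc.mp t.2).1, by have := (Set.mem_Icc.mp t.2).2; omega⟩⟩

theorem ext_bij {N : ℕ} (hN : 1 ≤ N) :
    Function.Bijective (fun p : ParentSeq N × Set.Icc 1 N => extF p.1 p.2) := by
  constructor
  · rintro ⟨f, k⟩ ⟨f', k'⟩ h
    have h1 := congrArg pval h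
    simp only [pval_extF hN] at h1
    have hk : k = k' := by
      have := congrFun h1 (N + 1)
      simp at this
      exact Subtype.ext this
    have hf : f = f' := by
      apply pval_inj
      funext j
      by_cases hj : j = N + 1
      · simp [pval, hj]
      · have := congrFun h1 j
        rwa [Function.update_of_ne hj, Function.update_of_ne hj] at this
    rw [hk, hf]
  · intro f
    refine ⟨⟨restF f, ⟨f ⟨N + 1, Set.mem_Icc.mpr ⟨by omega, le_refl _⟩⟩, ?_⟩⟩, ?_⟩
    · have := (f ⟨N + 1, Set.mem_Icc.mpr ⟨by omega, le_refl _⟩⟩).2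
      simpa using this
    · apply pval_inj
      rw [pval_extF hN]
      funext j
      by_cases hj : j = N + 1
      · subst hj
        have : 2 ≤ N + 1 := by omega
        simp [pval, this]
      · rw [Function.update_of_ne hj]
        by_cases h : 2 ≤ j ∧ j ≤ N
        · have h' : 2 ≤ j ∧ j ≤ N + 1 := by omega
          simp only [pval, dif_pos h, dif_pos h', restF]
        · have h' : ¬ (2 ≤ j ∧ j ≤ N + 1) := by omega
          simp only [pval, dif_neg h, dif_neg h']

theorem dg_update_lt (g : ℕ → ℕ) {s t : ℕ} (h : s < t) (k i : ℕ) :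
    dg (Function.update g t k) s i = dg g s i := by
  unfold dg
  congr 2
  apply Finset.filter_congr
  intro j hj
  rw [Finset.mem_Icc] at hj
  rw [Function.update_of_ne (by omega)]

theorem dg_update_succ (g : ℕ → ℕ) {N : ℕ} (hN : 1 ≤ N) (k i : ℕ) :
    dg (Function.update g (N + 1) k) (N + 1) i = dg g N i + if i = k then 1 else 0 := by
  have h1 : Finset.Icc 2 (N + 1) = insert (N + 1) (Finset.Icc 2 N) := by
    ext j; simp only [Finset.mem_Icc, Finset.mem_insert]; omega
  have h2 := dg_update_lt g (Nat.lt_succ_self N) k i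
  unfold dg at h2 ⊢
  rw [h1, Finset.filter_insert, Function.update_self]
  by_cases hk : k = i
  · rw [if_pos hk, Finset.card_insert_of_notMem (by simp), if_pos hk.symm]
    simp only [Nat.succ_eq_add_one] at h2
    omega
  · rw [if_neg hk, if_neg (Ne.symm hk)]
    simp only [Nat.succ_eq_add_one] at h2
    omega

theorem moriP_ext {N : ℕ} (hN : 1 ≤ N) (β : ℝ) (f : ParentSeq N) (k : Set.Icc 1 N) :
    moriP β (extF f k) = moriP β f * (((dg (pval f) N k : ℝ) + β) / WW β N) := by
  have h1 : Finset.Icc 2 (N + 1) = insert (N + 1) (Finset.Icc 2 N) := by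
    ext j; simp only [Finset.mem_Icc, Finset.mem_insert]; omega
  have hd : ∀ (M : ℕ) (f : ParentSeq M) t i, deg f t i = dg (pval f) t i := fun _ _ _ _ => rfl
  unfold moriP
  simp only [hd, pval_extF hN]
  rw [h1, Finset.prod_insert (by simp), mul_comm]
  congr 1
  · apply Finset.prod_congr rfl
    intro t ht
    rw [Finset.mem_Icc] at ht
    rw [Function.update_of_ne (by omega), dg_update_lt _ (by omega)]
  · rw [Function.update_self, dg_update_lt _ (by omega)]
    simp [WW]

theorem EE_step {N : ℕ} (hN : 1 ≤ N) (β : ℝ) (X : (ℕ → ℕ) → ℝ) :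
    EE (N + 1) β X = EE N β (fun g => ∑ k ∈ Finset.Icc 1 N,
      ((dg g N k : ℝ) + β) / WW β N * X (Function.update g (N + 1) k)) := by
  classical
  unfold EE moriE
  rw [← (Equiv.ofBijective _ (ext_bij hN)).sum_comp, Fintype.sum_prod_type]
  apply Finset.sum_congr rfl
  intro f _
  simp only [Equiv.ofBijective_apply, moriP_ext hN, pval_extF hN]
  rw [Finset.mul_sum]
  rw [← Finset.sum_coe_sort (Finset.Icc 1 N)]
  refine Fintype.sum_equiv (Equiv.subtypeEquivRight (by intro x; simp)) _ _ ?_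
  intro k
  simp only [Equiv.subtypeEquivRight_apply_coe]
  ring

theorem dg_sum {N : ℕ} (hN : 1 ≤ N) {g : ℕ → ℕ} (hg : Valid N g) (β : ℝ) :
    ∑ k ∈ Finset.Icc 1 N, ((dg g N k : ℝ) + β) = WW β N := by
  have h1 : ∑ k ∈ Finset.Icc 1 N, ((Finset.Icc 2 N).filter (fun j => g j = k)).card
      = (Finset.Icc 2 N).card := by
    symm
    apply Finset.card_eq_sum_card_fiberwise
    intro j hj
    simp only [Finset.coe_Icc, Set.mem_Icc] at hj ⊢
    have := hg j hj.1 hj.2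
    omega
  have h2 : ∑ k ∈ Finset.Icc 1 N, (if 2 ≤ k then 1 else 0) = (Finset.Icc 2 N).card := by
    rw [← Finset.sum_filter, Finset.card_eq_sum_ones]
    congr 1
    ext j; simp only [Finset.mem_filter, Finset.mem_Icc]; omega
  have h3 : ∑ k ∈ Finset.Icc 1 N, dg g N k = (N - 1) + (N - 1) := by
    unfold dg
    rw [Finset.sum_add_distrib, h1, h2]
    simp
  rw [Finset.sum_add_distrib, ← Nat.cast_sum, h3]
  simp only [Finset.sum_const, Nat.card_Icc, nsmul_eq_mul, WW]
  push_cast [Nat.cast_sub hN]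
  ring

theorem EE_tower1 {N : ℕ} (hN : 1 ≤ N) {β : ℝ} (hβ : 0 < β) (X : (ℕ → ℕ) → ℝ)
    (h : ∀ g k, X (Function.update g (N + 1) k) = X g) : EE (N + 1) β X = EE N β X := by
  rw [EE_step hN]
  apply EE_congr
  intro g hg
  simp only [h]
  rw [← Finset.sum_mul, ← Finset.sum_div, dg_sum hN hg, div_self (WW_pos' hβ hN).ne', one_mul]

theorem EE_tower {s N : ℕ} (hs : 1 ≤ s) (hN : s ≤ N) {β : ℝ} (hβ : 0 < β) (X : (ℕ → ℕ) → ℝ)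
    (h : ∀ g j k, s < j → X (Function.update g j k) = X g) : EE N β X = EE s β X := by
  induction N, hN using Nat.le_induction with
  | base => rfl
  | succ N hN ih => rw [EE_tower1 (by omega) hβ X (fun g k => h g _ k (by omega)), ih]

theorem EE_one_time (β : ℝ) (X : (ℕ → ℕ) → ℝ) : EE 1 β X = X (fun _ => 0) := by
  have hp : ∀ f : ParentSeq 1, pval f = fun _ => 0 := by
    intro f; funext j
    have h' : ¬ (2 ≤ j ∧ j ≤ 1) := by omega
    simp only [pval, dif_neg h']
  have : Unique (ParentSeq 1) :=
    { default := fun t => absurd (Set.mem_Icc.mp t.2) (by omega)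
      uniq := fun a => pval_inj ((hp _).trans (hp _).symm) }
  unfold EE moriE
  rw [Fintype.sum_unique]
  simp [hp, moriP]

theorem EE_const {N : ℕ} (hN : 1 ≤ N) {β : ℝ} (hβ : 0 < β) (c : ℝ) :
    EE N β (fun _ => c) = c := by
  rw [EE_tower le_rfl hN hβ _ (fun _ _ _ _ => rfl), EE_one_time]

theorem WW_succ (β : ℝ) (N : ℕ) : WW β (N + 1) = WW β N + 2 + β := by
  unfold WW; push_cast; ring

noncomputable def QQ (β : ℝ) (N : ℕ) (g : ℕ → ℕ) : ℝ :=
  ∑ i ∈ Finset.Icc 1 N, ((dg g N i : ℝ) + β) ^ 2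

theorem dg_new {N : ℕ} {g : ℕ → ℕ} (hg : Valid N g) {k : ℕ} (hk : 2 ≤ k) (u : ℕ) (hu : u ≤ k)
    (huN : u ≤ N) : dg g u k = 1 := by
  unfold dg
  rw [if_pos hk, Finset.filter_eq_empty_iff.mpr]
  · simp
  · intro j hj
    rw [Finset.mem_Icc] at hj
    have := hg j hj.1 (by omega)
    omega

theorem QQ_step {N : ℕ} (hN : 1 ≤ N) {g : ℕ → ℕ} (hg : Valid N g) (β : ℝ) {k : ℕ}
    (hk : k ∈ Finset.Icc 1 N) :
    QQ β (N + 1) (Function.update g (N + 1) k) =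
      QQ β N g + (2 * ((dg g N k : ℝ) + β) + (1 + (1 + β) ^ 2)) := by
  unfold QQ
  have h1 : Finset.Icc 1 (N + 1) = insert (N + 1) (Finset.Icc 1 N) := by
    ext j; simp only [Finset.mem_Icc, Finset.mem_insert]; omega
  rw [h1, Finset.sum_insert (by simp)]
  simp only [dg_update_succ g hN]
  rw [dg_new hg (by omega) N (by omega) le_rfl]
  have hk2 := Finset.mem_Icc.mp hk
  rw [if_neg (by omega)]
  have h2 : ∀ i ∈ Finset.Icc 1 N, (((dg g N i + if i = k then 1 else 0 : ℕ) : ℝ) + β) ^ 2 =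
      ((dg g N i : ℝ) + β) ^ 2 + if i = k then 2 * ((dg g N i : ℝ) + β) + 1 else 0 := by
    intro i _
    split_ifs
    · push_cast; ring
    · simp
  rw [Finset.sum_congr rfl h2, Finset.sum_add_distrib, Finset.sum_ite_eq' _ k, if_pos hk]
  push_cast
  ring

theorem EE_QQ {β : ℝ} (hβ : 0 < β) {N : ℕ} (hN : 1 ≤ N) :
    EE N β (QQ β N) ≤ ((1 + (1 + β) ^ 2) / β + β) * WW β N := by
  induction N, hN using Nat.le_induction with
  | base =>
    rw [EE_one_time]
    have : WW β 1 = β := by unfold WW; push_cast; ring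
    rw [this]
    simp only [QQ, dg]
    simp
    rw [add_mul, div_mul_cancel₀ _ hβ.ne']
    nlinarith [sq_nonneg (1 + β)]
  | succ N hN ih =>
    have hW := WW_pos' hβ hN
    have h1 : EE (N + 1) β (QQ β (N + 1)) =
        EE N β (fun g => (1 + 2 / WW β N) * QQ β N g + (1 + (1 + β) ^ 2)) := by
      rw [EE_step hN]
      apply EE_congr
      intro g hg
      rw [Finset.sum_congr rfl (fun k hk => by rw [QQ_step hN hg β hk])]
      have h3 : ∀ k ∈ Finset.Icc 1 N, ((dg g N k : ℝ) + β) / WW β N *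
          (QQ β N g + (2 * ((dg g N k : ℝ) + β) + (1 + (1 + β) ^ 2))) =
          ((dg g N k : ℝ) + β) * ((QQ β N g + (1 + (1 + β) ^ 2)) / WW β N)
          + ((dg g N k : ℝ) + β) ^ 2 * (2 / WW β N) := by
        intro k _
        ring
      rw [Finset.sum_congr rfl h3, Finset.sum_add_distrib, ← Finset.sum_mul, ← Finset.sum_mul,
        dg_sum hN hg]
      change _ + QQ β N g * _ = _
      field_simp
      ring
    rw [h1, EE_add, EE_mul, EE_const hN hβ, WW_succ]
    set C := (1 + (1 + β) ^ 2) / β + β with hC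
    have hC2 : 1 + (1 + β) ^ 2 ≤ C * β := by
      rw [hC, add_mul, div_mul_cancel₀ _ hβ.ne']
      nlinarith
    have h2 : (1 + 2 / WW β N) * EE N β (QQ β N) ≤ (1 + 2 / WW β N) * (C * WW β N) :=
      mul_le_mul_of_nonneg_left ih (by positivity)
    have h4 : (1 + 2 / WW β N) * (C * WW β N) = C * WW β N + 2 * C := by
      field_simp
    nlinarith

theorem blk_iff {m k c : ℕ} (hm : 1 ≤ m) (hk : 1 ≤ k) :
    blk m k = c ↔ (1 ≤ c ∧ k ∈ Finset.Ioc ((c - 1) * m) ((c - 1) * m + m)) := by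
  unfold blk
  rw [Finset.mem_Ioc]
  constructor
  · rintro rfl
    have h1 := Nat.div_add_mod (k - 1) m
    have h2 := Nat.mod_lt (k - 1) hm
    simp only [Nat.add_sub_cancel]
    rw [mul_comm]
    exact ⟨Nat.le_add_left 1 _, by omega, by omega⟩
  · rintro ⟨h1, h2, h3⟩
    have : (k - 1) / m = c - 1 := by
      apply Nat.div_eq_of_lt_le
      · omega
      · rw [add_mul]; omega
    omega

theorem blk_card_le {m : ℕ} (hm : 1 ≤ m) (u c : ℕ) :
    ((Finset.Icc 1 u).filter (fun k => blk m k = c)).card ≤ m := by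
  calc _ ≤ (Finset.Ioc ((c - 1) * m) ((c - 1) * m + m)).card := by
        apply Finset.card_le_card
        intro k hk
        rw [Finset.mem_filter, Finset.mem_Icc] at hk
        exact ((blk_iff hm hk.1.1).mp hk.2).2
    _ = m := by simp

theorem blk_mono {m j k : ℕ} (h : j ≤ k) : blk m j ≤ blk m k := by
  unfold blk
  have := Nat.div_le_div_right (c := m) (Nat.sub_le_sub_right h 1)
  omega

theorem blk_card_eq {n m : ℕ} (hm : 1 ≤ m) {s : ℕ} (hs : s ∈ Finset.Icc 1 (n * m)) :
    ((Finset.Icc 1 (n * m)).filter (fun k => blk m k = blk m s)).card = m := by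
  have h : (Finset.Icc 1 (n * m)).filter (fun k => blk m k = blk m s)
      = Finset.Ioc ((blk m s - 1) * m) ((blk m s - 1) * m + m) := by
    ext k
    rw [Finset.mem_filter]
    constructor
    · intro hk
      exact ((blk_iff hm (Finset.mem_Icc.mp hk.1).1).mp hk.2).2
    · intro hk
      have hk1 : 1 ≤ k := by rw [Finset.mem_Ioc] at hk; omega
      refine ⟨?_, (blk_iff hm hk1).mpr ⟨Nat.le_add_left 1 _, hk⟩⟩
      rw [Finset.mem_Icc] at hs ⊢
      rw [Finset.mem_Ioc] at hk
      refine ⟨hk1, hk.2.trans ?_⟩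
      have : (s - 1) / m < n := by
        rw [Nat.div_lt_iff_lt_mul hm]; omega
      calc (blk m s - 1) * m + m = ((s - 1) / m + 1) * m := by unfold blk; simp; ring
        _ ≤ n * m := Nat.mul_le_mul_right _ this
  rw [h]; simp

theorem blk_close {m s t : ℕ} (hm : 1 ≤ m) (hs : 1 ≤ s) (ht : 1 ≤ t) (h : blk m s = blk m t) :
    t < s + m := by
  have h1 := ((blk_iff hm hs).mp h).2
  have h2 := ((blk_iff hm ht).mp rfl).2
  rw [Finset.mem_Ioc] at h1 h2
  omega

theorem sum_blk_le {m : ℕ} (hm : 1 ≤ m) (u c : ℕ) {x : ℝ} (hx : 0 ≤ x) :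
    ∑ k ∈ Finset.Icc 1 u, (if blk m k = c then x else 0) ≤ m * x := by
  rw [← Finset.sum_filter, Finset.sum_const, nsmul_eq_mul]
  apply mul_le_mul_of_nonneg_right _ hx
  exact_mod_cast blk_card_le hm u c

theorem lemA {β : ℝ} (hβ : 0 < β) {m : ℕ} (hm : 1 ≤ m) {u N : ℕ} (hu : 1 ≤ u) (hN : u + 1 ≤ N) :
    EE N β (fun g => if blk m (g (u + 1)) = blk m (u + 1) then 1 else 0)
      ≤ m * (m + 1 + β) / WW β u := by
  have hW := WW_pos' hβ hu
  rw [EE_tower (by omega) hN hβ, EE_step hu]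
  swap
  · intro g j k hj
    rw [Function.update_of_ne (by omega)]
  rw [← EE_const hu hβ (m * (m + 1 + β) / WW β u)]
  apply EE_mono hβ
  intro g hg
  simp only [Function.update_self]
  calc _ ≤ ∑ k ∈ Finset.Icc 1 u, (if blk m k = blk m (u + 1) then (m + 1 + β) / WW β u else 0) := by
        apply Finset.sum_le_sum
        intro k hk
        rw [Finset.mem_Icc] at hk
        split_ifs with h
        · rw [mul_one]
          gcongr
          have hd : dg g u k ≤ m + 1 := by
            unfold dg
            have h1 : ((Finset.Icc 2 u).filter (fun j => g j = k)) ⊆ Finset.Ioc k u := by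
              intro j hj
              rw [Finset.mem_filter, Finset.mem_Icc] at hj
              rw [Finset.mem_Ioc]
              have := hg j hj.1.1 hj.1.2
              omega
            have h2 := Finset.card_le_card h1
            rw [Nat.card_Ioc] at h2
            have h3 := blk_close hm hk.1 (by omega) h
            split_ifs <;> omega
          exact_mod_cast hd
        · simp
    _ ≤ m * ((m + 1 + β) / WW β u) := sum_blk_le hm _ _ (by positivity)
    _ = _ := by ring

theorem dg_le_add (g : ℕ → ℕ) (s u k : ℕ) (h : s ≤ u) : dg g u k ≤ dg g s k + (u - s) := by
  unfold dg
  have h1 : (Finset.Icc 2 u).filter (fun j => g j = k) ⊆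
      (Finset.Icc 2 s).filter (fun j => g j = k) ∪ Finset.Ioc s u := by
    intro j hj
    simp only [Finset.mem_filter, Finset.mem_Icc, Finset.mem_union, Finset.mem_Ioc] at hj ⊢
    omega
  have h2 := (Finset.card_le_card h1).trans (Finset.card_union_le _ _)
  rw [Nat.card_Ioc] at h2
  omega

theorem lemB1 {β : ℝ} (hβ : 0 < β) {m : ℕ} (hm : 1 ≤ m) {v N : ℕ} (hv : 1 ≤ v) (hN : v + 1 ≤ N) :
    EE N β (fun g => ∑ k ∈ Finset.Icc 1 v,
      if blk m k = blk m (g (v + 1)) then ((dg g v k : ℝ) + β) else 0)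
      ≤ m * ((1 + (1 + β) ^ 2) / β + β) := by
  have hW := WW_pos' hβ hv
  rw [EE_tower (by omega) hN hβ, EE_step hv]
  swap
  · intro g j k hj
    rw [Function.update_of_ne (by omega)]
    simp only [dg_update_lt g (show v < j by omega)]
  have h1 : m * ((1 + (1 + β) ^ 2) / β + β) = m / WW β v * (((1 + (1 + β) ^ 2) / β + β) * WW β v) := by
    field_simp
  rw [h1]
  refine le_trans ?_ (mul_le_mul_of_nonneg_left (EE_QQ hβ hv) (by positivity))
  rw [← EE_mul]
  apply EE_mono hβ
  intro g hg
  simp only [Function.update_self, dg_update_lt g (Nat.lt_succ_self v)]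
  have key : ∀ l ∈ Finset.Icc 1 v, ∀ k ∈ Finset.Icc 1 v,
      ((dg g v l : ℝ) + β) / WW β v * (if blk m k = blk m l then ((dg g v k : ℝ) + β) else 0)
      ≤ (if blk m k = blk m l then ((dg g v l : ℝ) + β) ^ 2 / (2 * WW β v) else 0) +
        (if blk m l = blk m k then ((dg g v k : ℝ) + β) ^ 2 / (2 * WW β v) else 0) := by
    intro l _ k _
    by_cases h : blk m k = blk m l
    · rw [if_pos h, if_pos h, if_pos h.symm, div_mul_eq_mul_div, ← add_div,
        div_le_div_iff₀ hW (by positivity)]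
      nlinarith [mul_nonneg hW.le (sq_nonneg (((dg g v l : ℝ) + β) - ((dg g v k : ℝ) + β)))]
    · rw [if_neg h, if_neg h, if_neg (Ne.symm h)]; simp
  have half : ∑ l ∈ Finset.Icc 1 v, ∑ k ∈ Finset.Icc 1 v,
      (if blk m k = blk m l then ((dg g v l : ℝ) + β) ^ 2 / (2 * WW β v) else 0)
      ≤ m * QQ β v g / (2 * WW β v) := by
    calc _ ≤ ∑ l ∈ Finset.Icc 1 v, m * (((dg g v l : ℝ) + β) ^ 2 / (2 * WW β v)) := by
          apply Finset.sum_le_sum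
          intro l _
          exact sum_blk_le hm _ _ (by positivity)
      _ = _ := by
          unfold QQ
          rw [Finset.mul_sum, Finset.sum_div]
          apply Finset.sum_congr rfl
          intros; ring
  calc _ ≤ ∑ l ∈ Finset.Icc 1 v, ∑ k ∈ Finset.Icc 1 v,
        ((if blk m k = blk m l then ((dg g v l : ℝ) + β) ^ 2 / (2 * WW β v) else 0) +
        (if blk m l = blk m k then ((dg g v k : ℝ) + β) ^ 2 / (2 * WW β v) else 0)) := by
        apply Finset.sum_le_sum
        intro l hl
        rw [Finset.mul_sum]
        apply Finset.sum_le_sum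
        intro k hk
        exact key l hl k hk
    _ ≤ m * QQ β v g / (2 * WW β v) + m * QQ β v g / (2 * WW β v) := by
        simp only [Finset.sum_add_distrib]
        apply add_le_add half
        rw [Finset.sum_comm]
        exact half
    _ = _ := by field_simp; ring

theorem lemB {β : ℝ} (hβ : 0 < β) {m : ℕ} (hm : 1 ≤ m) {v u N : ℕ} (hv : 1 ≤ v) (hvu : v + 1 ≤ u)
    (hum : u ≤ v + m) (hN : u + 1 ≤ N) :
    EE N β (fun g => if blk m (g (v + 1)) = blk m (g (u + 1)) then 1 else 0)
      ≤ (m * ((1 + (1 + β) ^ 2) / β + β) + m * (m + 1 + β)) / WW β u := by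
  have hu : 1 ≤ u := by omega
  have hW := WW_pos' hβ hu
  rw [EE_tower (by omega) hN hβ, EE_step hu]
  swap
  · intro g j k hj
    rw [Function.update_of_ne (by omega), Function.update_of_ne (by omega)]
  have h0 := lemB1 hβ hm hv hvu
  have h1 := EE_const hu hβ (m * (m + 1 + β))
  have h2 := add_le_add h0 h1.le
  rw [← EE_add] at h2
  refine le_trans ?_ (div_le_div_of_nonneg_right h2 hW.le)
  rw [div_eq_inv_mul, ← EE_mul]
  apply EE_mono hβ
  intro g hg
  simp only [Function.update_self, Function.update_of_ne (show v + 1 ≠ u + 1 by omega)]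
  have hsub : Finset.Icc 1 v ⊆ Finset.Icc 1 u := Finset.Icc_subset_Icc le_rfl (by omega)
  calc _ ≤ ∑ k ∈ Finset.Icc 1 u, (WW β u)⁻¹ * ((if k ∈ Finset.Icc 1 v then
          (if blk m k = blk m (g (v + 1)) then ((dg g v k : ℝ) + β) else 0) else 0) +
          (if blk m k = blk m (g (v + 1)) then ((m : ℝ) + 1 + β) else 0)) := by
        apply Finset.sum_le_sum
        intro k hk
        rw [Finset.mem_Icc] at hk
        rw [div_eq_inv_mul, mul_assoc]
        apply mul_le_mul_of_nonneg_left _ (by positivity)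
        by_cases h : blk m (g (v + 1)) = blk m k
        · simp only [if_pos h, if_pos h.symm, mul_one]
          have h3 := dg_le_add g v u k (by omega)
          have h4 : dg g u k ≤ dg g v k + m := by omega
          have h5 : (dg g u k : ℝ) ≤ dg g v k + m := by exact_mod_cast h4
          split_ifs with h6
          · linarith
          · rw [Finset.mem_Icc] at h6
            rw [dg_new hg (by omega) v (by omega) (by omega)] at h5
            push_cast at h5
            linarith
        · simp only [if_neg h, if_neg (Ne.symm h)]
          simp
    _ = (WW β u)⁻¹ * ((∑ k ∈ Finset.Icc 1 v,
          (if blk m k = blk m (g (v + 1)) then ((dg g v k : ℝ) + β) else 0)) +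
          ∑ k ∈ Finset.Icc 1 u, (if blk m k = blk m (g (v + 1)) then ((m : ℝ) + 1 + β) else 0)) := by
        rw [← Finset.mul_sum, Finset.sum_add_distrib, Finset.sum_ite_mem,
          Finset.inter_eq_right.mpr hsub]
    _ ≤ _ := by
        apply mul_le_mul_of_nonneg_left _ (by positivity)
        apply add_le_add le_rfl
        exact sum_blk_le hm _ _ (by positivity)

noncomputable def FF (m s t : ℕ) (g : ℕ → ℕ) : ℝ :=
  if blk m s = blk m t ∧ blk m (g s) < blk m (g t) ∧ blk m (g t) < blk m t then 1 else 0

noncomputable def DD (m s t : ℕ) (g : ℕ → ℕ) : ℝ := 1 - FF m s t g - FF m t s g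

theorem DD_nonneg (m s t : ℕ) (g : ℕ → ℕ) : 0 ≤ DD m s t g := by
  unfold DD FF
  split_ifs <;> first | omega | norm_num

theorem DD_le (m s t : ℕ) (g : ℕ → ℕ) : DD m s t g ≤ 1 := by
  unfold DD FF
  split_ifs <;> norm_num

theorem DD_symm (m s t : ℕ) (g : ℕ → ℕ) : DD m s t g = DD m t s g := by
  unfold DD; ring

theorem DD_le3 {m s t N : ℕ} {g : ℕ → ℕ} (hg : Valid N g) (hs : 2 ≤ s) (hsN : s ≤ N)
    (ht : 2 ≤ t) (htN : t ≤ N) (hst : blk m s = blk m t) :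
    DD m s t g ≤ ((if blk m (g s) = blk m s then 1 else 0) + (if blk m (g t) = blk m t then 1 else 0))
      + (if blk m (g s) = blk m (g t) then 1 else 0) := by
  have h1 := blk_mono (m := m) (hg s hs hsN).2.le
  have h2 := blk_mono (m := m) (hg t ht htN).2.le
  unfold DD FF
  split_ifs <;> first | omega | norm_num

noncomputable def CA (m : ℕ) (β : ℝ) : ℝ := m * (m + 1 + β)
noncomputable def CB (m : ℕ) (β : ℝ) : ℝ := m * ((1 + (1 + β) ^ 2) / β + β) + m * (m + 1 + β)
noncomputable def CC (m : ℕ) (β : ℝ) : ℝ := 2 * (2 * CA m β + CB m β) / β + 1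

theorem CA_nonneg (m : ℕ) {β : ℝ} (hβ : 0 < β) : 0 ≤ CA m β := by unfold CA; positivity
theorem CB_nonneg (m : ℕ) {β : ℝ} (hβ : 0 < β) : 0 ≤ CB m β := by unfold CB; positivity
theorem CC_pos (m : ℕ) {β : ℝ} (hβ : 0 < β) : 1 ≤ CC m β := by
  have := CA_nonneg m hβ
  have := CB_nonneg m hβ
  unfold CC
  have : 0 ≤ 2 * (2 * CA m β + CB m β) / β := by positivity
  linarith

theorem pair_bound {β : ℝ} (hβ : 0 < β) {m : ℕ} (hm : 1 ≤ m) {s t N : ℕ} (hs : 1 ≤ s) (hst : s < t)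
    (htN : t ≤ N) (hb : blk m s = blk m t) : EE N β (DD m s t) ≤ CC m β / s := by
  have hA := CA_nonneg m hβ
  have hB := CB_nonneg m hβ
  have hC := CC_pos m hβ
  rcases Nat.eq_or_lt_of_le hs with h1 | h1
  · rw [← EE_const (N := N) (by omega) hβ (CC m β / s)]
    apply EE_mono hβ
    intro g _
    rw [← h1]
    simpa using (DD_le _ _ _ _).trans hC
  · obtain ⟨v, rfl⟩ : ∃ v, s = v + 1 := ⟨s - 1, by omega⟩
    obtain ⟨u, rfl⟩ : ∃ u, t = u + 1 := ⟨t - 1, by omega⟩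
    have hv : 1 ≤ v := by omega
    have hcl := blk_close hm hs (by omega) hb
    have a1 := lemA hβ hm hv (show v + 1 ≤ N by omega)
    have a2 := lemA hβ hm (show 1 ≤ u by omega) htN
    have b1 := lemB hβ hm hv (show v + 1 ≤ u by omega) (by omega) htN
    have e1 : EE N β (DD m (v + 1) (u + 1)) ≤ _ :=
      EE_mono hβ (fun g hg => DD_le3 (m := m) hg (show 2 ≤ v + 1 by omega) (by omega) (by omega) htN hb)
    rw [EE_add, EE_add] at e1
    have hv' : (1 : ℝ) ≤ v := by exact_mod_cast hv
    have hvu : (v : ℝ) ≤ u := by exact_mod_cast (show v ≤ u by omega)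
    have w1 : β * v ≤ WW β v := WW_pos hβ hv
    have w2 : β * v ≤ WW β u := (mul_le_mul_of_nonneg_left hvu hβ.le).trans (WW_pos hβ (by omega))
    have hp : 0 < β * v := by positivity
    have q1 : CA m β / WW β v ≤ CA m β / (β * v) := div_le_div_of_nonneg_left hA hp w1
    have q2 : CA m β / WW β u ≤ CA m β / (β * v) := div_le_div_of_nonneg_left hA hp w2
    have q3 : CB m β / WW β u ≤ CB m β / (β * v) := div_le_div_of_nonneg_left hB hp w2
    have q4 : CA m β / (β * v) + CA m β / (β * v) + CB m β / (β * v) ≤ CC m β / ((v + 1 : ℕ) : ℝ) := by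
      rw [← add_div, ← add_div, div_le_div_iff₀ hp (by positivity)]
      unfold CC
      push_cast
      have : (2 * (2 * CA m β + CB m β) / β + 1) * (β * v) =
        2 * (2 * CA m β + CB m β) * v + β * v := by field_simp
      rw [this]
      nlinarith
    unfold CA at q1 q2 q4
    unfold CB at q3 q4
    linarith

theorem pair_bound' {β : ℝ} (hβ : 0 < β) {m : ℕ} (hm : 1 ≤ m) {s t N : ℕ} (hs : 1 ≤ s) (hsN : s ≤ N)
    (ht : 1 ≤ t) (htN : t ≤ N) (hne : s ≠ t) (hb : blk m s = blk m t) :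
    EE N β (DD m s t) ≤ CC m β / s + CC m β / t := by
  have hC := CC_pos m hβ
  have p1 : 0 ≤ CC m β / s := by positivity
  have p2 : 0 ≤ CC m β / t := by positivity
  rcases lt_or_gt_of_ne hne with h | h
  · linarith [pair_bound hβ hm hs h htN hb]
  · have := pair_bound hβ hm ht h hsN hb.symm
    have e : DD m s t = DD m t s := funext (DD_symm m s t)
    rw [e]; linarith

theorem mult_eq {n m : ℕ} (f : ParentSeq (n * m)) {a c : ℕ} (ha : 1 ≤ a) (hac : a < c) :
    (mult n m f a c : ℝ) =
      ∑ t ∈ Finset.Icc 1 (n * m), if blk m t = c ∧ blk m (pval f t) = a then 1 else 0 := by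
  rw [Finset.sum_boole]
  congr 1
  unfold mult
  congr 1
  ext t
  simp only [Finset.mem_filter, Finset.mem_Icc]
  constructor
  · rintro ⟨h1, h2⟩
    refine ⟨by omega, ?_⟩
    have h3 := blk_mono (m := m) (pval_valid f t h1.1 h1.2).2.le
    omega
  · rintro ⟨h1, h2⟩
    refine ⟨⟨?_, h1.2⟩, by omega⟩
    by_contra h3
    have h4 : t = 1 := by omega
    subst h4
    have : blk m 1 = 1 := by simp [blk]
    omega

theorem blk_le {n m t : ℕ} (hm : 1 ≤ m) (ht : t ∈ Finset.Icc 1 (n * m)) : blk m t ≤ n := by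
  rw [Finset.mem_Icc] at ht
  have : (t - 1) / m < n := by
    rw [Nat.div_lt_iff_lt_mul hm]; omega
  unfold blk
  omega

theorem inner_eq {n m s t : ℕ} (hm : 1 ≤ m) (g : ℕ → ℕ)
    (ht : t ∈ Finset.Icc 1 (n * m)) :
    ∑ a ∈ Finset.Icc 1 n, ∑ b ∈ Finset.Ioc a n, ∑ c ∈ Finset.Ioc b n,
      ((if blk m s = c ∧ blk m (g s) = a then (1 : ℝ) else 0) *
        (if blk m t = c ∧ blk m (g t) = b then 1 else 0)) = FF m s t g := by
  have h : ∀ a b c, ((if blk m s = c ∧ blk m (g s) = a then (1 : ℝ) else 0) *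
        (if blk m t = c ∧ blk m (g t) = b then 1 else 0)) =
      if blk m (g s) = a then (if blk m (g t) = b then (if blk m t = c then
        (if blk m s = c then 1 else 0) else 0) else 0) else 0 := by
    intro a b c
    split_ifs <;> first | omega | simp
  have h2 : ∀ a b, ∑ c ∈ Finset.Ioc b n, (if blk m (g s) = a then (if blk m (g t) = b then
      (if blk m t = c then (if blk m s = c then (1 : ℝ) else 0) else 0) else 0) else 0) =
      if blk m (g s) = a then (if blk m (g t) = b then (if blk m t ∈ Finset.Ioc b n then
        (if blk m s = blk m t then 1 else 0) else 0) else 0) else 0 := by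
    intro a b
    by_cases h1 : blk m (g s) = a
    · by_cases h2 : blk m (g t) = b
      · simp only [if_pos h1, if_pos h2]
        rw [Finset.sum_ite_eq]
      · simp [h2]
    · simp [h1]
  have h3 : ∀ a, ∑ b ∈ Finset.Ioc a n, (if blk m (g s) = a then (if blk m (g t) = b then
      (if blk m t ∈ Finset.Ioc b n then
        (if blk m s = blk m t then (1 : ℝ) else 0) else 0) else 0) else 0) =
      if blk m (g s) = a then (if blk m (g t) ∈ Finset.Ioc a n then
      (if blk m t ∈ Finset.Ioc (blk m (g t)) n then
        (if blk m s = blk m t then 1 else 0) else 0) else 0) else 0 := by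
    intro a
    by_cases h1 : blk m (g s) = a
    · simp only [if_pos h1]
      rw [Finset.sum_ite_eq]
    · simp [h1]
  simp only [h, h2, h3]
  rw [Finset.sum_ite_eq]
  have h5 := blk_le hm ht
  have h6 : 1 ≤ blk m (g s) := Nat.le_add_left 1 _
  unfold FF
  simp only [Finset.mem_Icc, Finset.mem_Ioc]
  split_ifs <;> first | omega | rfl

theorem S_eq {n m : ℕ} (hm : 1 ≤ m) (f : ParentSeq (n * m)) :
    ∑ a ∈ Finset.Icc 1 n, ∑ b ∈ Finset.Ioc a n, ∑ c ∈ Finset.Ioc b n,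
      (mult n m f a c : ℝ) * (mult n m f b c : ℝ) =
    ∑ s ∈ Finset.Icc 1 (n * m), ∑ t ∈ Finset.Icc 1 (n * m), FF m s t (pval f) := by
  calc _ = ∑ a ∈ Finset.Icc 1 n, ∑ b ∈ Finset.Ioc a n, ∑ c ∈ Finset.Ioc b n,
      ∑ p ∈ Finset.Icc 1 (n * m) ×ˢ Finset.Icc 1 (n * m),
      ((if blk m p.1 = c ∧ blk m (pval f p.1) = a then (1 : ℝ) else 0) *
        (if blk m p.2 = c ∧ blk m (pval f p.2) = b then 1 else 0)) := by
        refine Finset.sum_congr rfl fun a ha => Finset.sum_congr rfl fun b hb =>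
          Finset.sum_congr rfl fun c hc => ?_
        rw [Finset.mem_Icc] at ha
        rw [Finset.mem_Ioc] at hb hc
        rw [mult_eq f ha.1 (by omega), mult_eq f (by omega) hc.1, Finset.sum_mul_sum,
          Finset.sum_product]
    _ = ∑ a ∈ Finset.Icc 1 n, ∑ b ∈ Finset.Ioc a n,
      ∑ p ∈ Finset.Icc 1 (n * m) ×ˢ Finset.Icc 1 (n * m), ∑ c ∈ Finset.Ioc b n,
      ((if blk m p.1 = c ∧ blk m (pval f p.1) = a then (1 : ℝ) else 0) *
        (if blk m p.2 = c ∧ blk m (pval f p.2) = b then 1 else 0)) := by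
        refine Finset.sum_congr rfl fun a ha => Finset.sum_congr rfl fun b hb => ?_
        rw [Finset.sum_comm]
    _ = ∑ a ∈ Finset.Icc 1 n,
      ∑ p ∈ Finset.Icc 1 (n * m) ×ˢ Finset.Icc 1 (n * m), ∑ b ∈ Finset.Ioc a n, ∑ c ∈ Finset.Ioc b n,
      ((if blk m p.1 = c ∧ blk m (pval f p.1) = a then (1 : ℝ) else 0) *
        (if blk m p.2 = c ∧ blk m (pval f p.2) = b then 1 else 0)) := by
        refine Finset.sum_congr rfl fun a ha => ?_
        rw [Finset.sum_comm]
    _ = ∑ p ∈ Finset.Icc 1 (n * m) ×ˢ Finset.Icc 1 (n * m), FF m p.1 p.2 (pval f) := by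
        rw [Finset.sum_comm]
        refine Finset.sum_congr rfl fun p hp => ?_
        exact inner_eq hm _ (Finset.mem_product.mp hp).2
    _ = _ := by rw [Finset.sum_product]

theorem pairs_count {n m : ℕ} (hm : 1 ≤ m) :
    ∑ s ∈ Finset.Icc 1 (n * m), ∑ t ∈ Finset.Icc 1 (n * m),
      (if blk m t = blk m s ∧ t ≠ s then (1 : ℝ) else 0) = n * (m * (m - 1)) := by
  have h : ∀ s ∈ Finset.Icc 1 (n * m), ∑ t ∈ Finset.Icc 1 (n * m),
      (if blk m t = blk m s ∧ t ≠ s then (1 : ℝ) else 0) = m - 1 := by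
    intro s hs
    have h1 : ∀ t ∈ Finset.Icc 1 (n * m), (if blk m t = blk m s ∧ t ≠ s then (1 : ℝ) else 0) =
        (if blk m t = blk m s then 1 else 0) - (if t = s then 1 else 0) := by
      intro t _
      by_cases h : t = s
      · simp [h]
      · simp [h]
    rw [Finset.sum_congr rfl h1, Finset.sum_sub_distrib, Finset.sum_ite_eq', if_pos hs,
      Finset.sum_boole, blk_card_eq hm hs]
  rw [Finset.sum_congr rfl h]
  simp
  ring

theorem deficit {n m : ℕ} (hm : 1 ≤ m) (g : ℕ → ℕ) :
    2 * ∑ s ∈ Finset.Icc 1 (n * m), ∑ t ∈ Finset.Icc 1 (n * m), FF m s t g +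
    ∑ s ∈ Finset.Icc 1 (n * m), ∑ t ∈ Finset.Icc 1 (n * m),
      (if blk m t = blk m s ∧ t ≠ s then (1 : ℝ) else 0) * DD m s t g = n * (m * (m - 1)) := by
  rw [← pairs_count hm, two_mul]
  nth_rewrite 2 [Finset.sum_comm]
  simp only [← Finset.sum_add_distrib]
  refine Finset.sum_congr rfl fun s _ => Finset.sum_congr rfl fun t _ => ?_
  by_cases h : blk m t = blk m s ∧ t ≠ s
  · rw [if_pos h]; unfold DD; ring
  · rw [if_neg h]
    have h1 : ∀ a b, ¬ (blk m a = blk m b ∧ a ≠ b) → FF m a b g = 0 := by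
      intro a b hab
      unfold FF
      rw [if_neg]
      rintro ⟨h1, h2, _⟩
      apply hab
      refine ⟨h1, ?_⟩
      rintro rfl
      omega
    rw [h1 t s h, h1 s t (by tauto)]
    simp

theorem double_bound {β : ℝ} (hβ : 0 < β) {n m : ℕ} (hm : 1 ≤ m) (hn : 1 ≤ n) :
    ∑ s ∈ Finset.Icc 1 (n * m), ∑ t ∈ Finset.Icc 1 (n * m),
      (if blk m t = blk m s ∧ t ≠ s then (1 : ℝ) else 0) * EE (n * m) β (DD m s t) ≤
      2 * (m * CC m β * ∑ s ∈ Finset.Icc 1 (n * m), ((s : ℝ))⁻¹) := by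
  have hC := CC_pos m hβ
  have half : ∑ s ∈ Finset.Icc 1 (n * m), ∑ t ∈ Finset.Icc 1 (n * m),
      (if blk m t = blk m s then CC m β / s else 0) ≤
      m * CC m β * ∑ s ∈ Finset.Icc 1 (n * m), ((s : ℝ))⁻¹ := by
    rw [Finset.mul_sum]
    apply Finset.sum_le_sum
    intro s _
    refine (sum_blk_le hm _ _ (by positivity)).trans (le_of_eq ?_)
    ring
  calc _ ≤ ∑ s ∈ Finset.Icc 1 (n * m), ∑ t ∈ Finset.Icc 1 (n * m),
      ((if blk m t = blk m s then CC m β / s else 0) +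
       (if blk m s = blk m t then CC m β / t else 0)) := by
        apply Finset.sum_le_sum
        intro s hs
        apply Finset.sum_le_sum
        intro t ht
        rw [Finset.mem_Icc] at hs ht
        have p1 : 0 ≤ CC m β / s := by positivity
        have p2 : 0 ≤ CC m β / t := by positivity
        by_cases h : blk m t = blk m s ∧ t ≠ s
        · rw [if_pos h, if_pos h.1, if_pos h.1.symm, one_mul]
          exact pair_bound' hβ hm hs.1 hs.2 ht.1 ht.2 h.2.symm h.1.symm
        · rw [if_neg h, zero_mul]
          split_ifs <;> positivity
    _ ≤ _ := by
        simp only [Finset.sum_add_distrib]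
        rw [two_mul]
        apply add_le_add half
        rw [Finset.sum_comm]
        exact half

theorem harm_bound {β : ℝ} (hβ : 0 < β) {n m : ℕ} (hm : 1 ≤ m) (hn : 1 ≤ n) :
    ∑ s ∈ Finset.Icc 1 (n * m), ((s : ℝ))⁻¹ ≤
      (1 + Real.log m + (2 + β)) * (n : ℝ) ^ (1 / (2 + β)) := by
  have h1 := harmonic_le_one_add_log (n * m)
  rw [harmonic_eq_sum_Icc] at h1
  push_cast at h1
  have hn' : (1 : ℝ) ≤ n := by exact_mod_cast hn
  have hm' : (1 : ℝ) ≤ m := by exact_mod_cast hm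
  rw [Real.log_mul (by positivity) (by positivity)] at h1
  have h2 := Real.log_le_rpow_div (x := (n : ℝ)) (by positivity) (show 0 < 1 / (2 + β) by positivity)
  have h3 : (1 : ℝ) ≤ (n : ℝ) ^ (1 / (2 + β)) := Real.one_le_rpow hn' (by positivity)
  have h4 := Real.log_nonneg hm'
  have h5 : (n : ℝ) ^ (1 / (2 + β)) / (1 / (2 + β)) = (2 + β) * (n : ℝ) ^ (1 / (2 + β)) := by
    field_simp
  rw [h5] at h2
  nlinarith

/-- The total number of pairs of adjacent half-edges in `G^n_{m,β}` whose common vertex has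
the largest index is `(m(m−1)/2)·n + O(n^{1/(2+β)})` in expectation. -/
theorem total_adjacent_pairs_largest_index (β : ℝ) (hβ : 0 < β) (m : ℕ) (hm : 1 ≤ m) :
    ∃ K : ℝ, 0 < K ∧ ∀ n : ℕ, 1 ≤ n →
      |moriE (n * m) β
          (fun f => ∑ a ∈ Finset.Icc 1 n, ∑ b ∈ Finset.Ioc a n, ∑ c ∈ Finset.Ioc b n,
            (mult n m f a c : ℝ) * (mult n m f b c : ℝ))
        - ((m : ℝ) * ((m : ℝ) - 1) / 2) * (n : ℝ)| ≤ K * (n : ℝ) ^ (1 / (2 + β)) := by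
  have hC := CC_pos m hβ
  have hm' : (1 : ℝ) ≤ m := by exact_mod_cast hm
  have hl := Real.log_nonneg hm'
  refine ⟨m * CC m β * (1 + Real.log m + (2 + β)), by positivity, ?_⟩
  intro n hn
  have hN : 1 ≤ n * m := Nat.mul_pos hn hm
  have e1 : moriE (n * m) β
          (fun f => ∑ a ∈ Finset.Icc 1 n, ∑ b ∈ Finset.Ioc a n, ∑ c ∈ Finset.Ioc b n,
            (mult n m f a c : ℝ) * (mult n m f b c : ℝ)) =
      EE (n * m) β (fun g => ∑ s ∈ Finset.Icc 1 (n * m), ∑ t ∈ Finset.Icc 1 (n * m), FF m s t g) := by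
    unfold EE
    congr 1
    funext f
    exact S_eq hm f
  rw [e1]
  have e2 := EE_const hN hβ ((n : ℝ) * (m * (m - 1)))
  rw [← EE_congr (fun g _ => deficit (n := n) hm g), EE_add, EE_mul] at e2
  have e3 : EE (n * m) β (fun g => ∑ s ∈ Finset.Icc 1 (n * m), ∑ t ∈ Finset.Icc 1 (n * m),
      (if blk m t = blk m s ∧ t ≠ s then (1 : ℝ) else 0) * DD m s t g) =
      ∑ s ∈ Finset.Icc 1 (n * m), ∑ t ∈ Finset.Icc 1 (n * m),
      (if blk m t = blk m s ∧ t ≠ s then (1 : ℝ) else 0) * EE (n * m) β (DD m s t) := by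
    rw [EE_sum]
    refine Finset.sum_congr rfl fun s _ => ?_
    rw [EE_sum]
    refine Finset.sum_congr rfl fun t _ => ?_
    rw [EE_mul]
  have e4 : 0 ≤ EE (n * m) β (fun g => ∑ s ∈ Finset.Icc 1 (n * m), ∑ t ∈ Finset.Icc 1 (n * m),
      (if blk m t = blk m s ∧ t ≠ s then (1 : ℝ) else 0) * DD m s t g) := by
    refine le_trans (EE_const hN hβ 0).ge ?_
    apply EE_mono hβ
    intro g _
    refine Finset.sum_nonneg fun s _ => Finset.sum_nonneg fun t _ => ?_
    have := DD_nonneg m s t g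
    split_ifs <;> simp [this]
  have e5 := double_bound hβ hm hn
  have e6 := mul_le_mul_of_nonneg_left (harm_bound hβ hm hn) (show 0 ≤ m * CC m β by positivity)
  rw [← e3] at e5
  rw [abs_le]
  constructor <;> nlinarith
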